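/- arXiv:2105.09985 — 9 statements merged into one kernel-verified Lean document; each statement's English description precedes it below -/
import Mathlib

section
/- Suppose that for each ℓ ∈ {0,1}, the event Y is conditionally independent of the pair (V, V̂) given L_ℓ, in the sense that for all a, b ∈ {0,1} one has μ(Y ∩ Vᵃ ∩ V̂ᵇ ∩ L_ℓ) · μ(L_ℓ) = μ(Y ∩ L_ℓ) · μ(Vᵃ ∩ V̂ᵇ ∩ L_ℓ). Then G = Ĝ. -/
open MeasureTheory

/-- Conditional probability `P(A | B) = μ(A ∩ B) / μ(B)` as a real number. -/
noncomputable def condP {Ω : Type*} [MeasurableSpace Ω] (μ : Measure Ω) (A B : Set Ω) : ℝ :=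
  (μ (A ∩ B)).toReal / (μ B).toReal

/-- `ev S true = S` (the event `s = 1`) and `ev S false = Sᶜ` (the event `s = 0`). -/
def ev {Ω : Type*} (S : Set Ω) (b : Bool) : Set Ω := bif b then S else Sᶜ

/-- If `Y` splits over `W` and its complement within both `A`-parts, `P(Y | A ∩ L) = P(Y | L)`. -/
theorem aux_condP {Ω : Type*} [MeasurableSpace Ω] (μ : Measure Ω) [IsProbabilityMeasure μ]
    (Y A W L : Set Ω) (hW : MeasurableSet W)
    (hL : 0 < μ L) (hA : 0 < μ (A ∩ L))
    (h1 : μ (Y ∩ (A ∩ L) ∩ W) * μ L = μ (Y ∩ L) * μ (A ∩ L ∩ W))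
    (h2 : μ ((Y ∩ (A ∩ L)) \ W) * μ L = μ (Y ∩ L) * μ ((A ∩ L) \ W)) :
    condP μ Y (A ∩ L) = condP μ Y L := by
  have key : μ (Y ∩ (A ∩ L)) * μ L = μ (Y ∩ L) * μ (A ∩ L) := by
    rw [← measure_inter_add_diff (Y ∩ (A ∩ L)) hW, ← measure_inter_add_diff (A ∩ L) hW,
      add_mul, mul_add, h1, h2]
  have k2 := congrArg ENNReal.toReal key
  rw [ENNReal.toReal_mul, ENNReal.toReal_mul] at k2
  have p1 := (ENNReal.toReal_pos hL.ne' (measure_ne_top μ _)).ne'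
  have p2 := (ENNReal.toReal_pos hA.ne' (measure_ne_top μ _)).ne'
  unfold condP
  rw [div_eq_div_iff p2 p1]
  exact k2

/-- If `Y` is conditionally independent of the pair `(V, V̂)` given `L ℓ` for each `ℓ`,
then the true gap `G` equals the proxy gap `Ĝ`. -/
theorem stmt_0 {Ω : Type*} [MeasurableSpace Ω] (μ : Measure Ω) [IsProbabilityMeasure μ]
    (Y V Vh : Set Ω) (L : Bool → Set Ω)
    (hY : MeasurableSet Y) (hV : MeasurableSet V) (hVh : MeasurableSet Vh)
    (hL : ∀ l, MeasurableSet (L l))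
    (hposL : ∀ l, 0 < μ (L l))
    (hposVL : ∀ l, 0 < μ (V ∩ L l))
    (hposVhL : ∀ l, 0 < μ (Vh ∩ L l))
    (hind : ∀ (l a b : Bool),
      μ (Y ∩ ev V a ∩ ev Vh b ∩ L l) * μ (L l)
        = μ (Y ∩ L l) * μ (ev V a ∩ ev Vh b ∩ L l)) :
    condP μ Y (V ∩ L true) - condP μ Y (V ∩ L false)
      = condP μ Y (Vh ∩ L true) - condP μ Y (Vh ∩ L false) := by
  have e1 : ∀ l, condP μ Y (V ∩ L l) = condP μ Y (L l) := by
    intro l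
    apply aux_condP μ Y V Vh (L l) hVh (hposL l) (hposVL l)
    · convert hind l true true using 3 <;> (ext x; simp [ev]; tauto)
    · convert hind l true false using 3 <;> (ext x; simp [ev]; tauto)
  have e2 : ∀ l, condP μ Y (Vh ∩ L l) = condP μ Y (L l) := by
    intro l
    apply aux_condP μ Y Vh V (L l) hV (hposL l) (hposVhL l)
    · convert hind l true true using 3 <;> (ext x; simp [ev]; tauto)
    · convert hind l false true using 3 <;> (ext x; simp [ev]; tauto)
  rw [e1, e1, e2, e2]
end

section
/- Suppose that for each ℓ ∈ {0,1} and each a ∈ {0,1}, P(Y | Vᵃ ∩ V̂ ∩ L_ℓ) = P(Y | Vᵃ ∩ L_ℓ) (i.e., y is conditionally independent of the proxy given the covariate and the group), and that for each ℓ ∈ {0,1} the conditional precision of the proxy is at least 1 − p, i.e., P(Vᶜ | V̂ ∩ L_ℓ) ≤ p. Then |G − Ĝ| ≤ 2p. -/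
open MeasureTheory

/-- If `Y` is conditionally independent of the proxy given the covariate and the group, and
the proxy has conditional precision at least `1 - p` on each slice, then `|G - Ĝ| ≤ 2p`. -/
theorem stmt_1 {Ω : Type*} [MeasurableSpace Ω] (μ : Measure Ω) [IsProbabilityMeasure μ]
    (Y V Vh : Set Ω) (L : Bool → Set Ω) (p : ℝ)
    (hY : MeasurableSet Y) (hV : MeasurableSet V) (hVh : MeasurableSet Vh)
    (hL : ∀ l, MeasurableSet (L l))
    (hpos1 : ∀ (l a : Bool), 0 < μ (ev V a ∩ Vh ∩ L l))
    (hpos2 : ∀ (l a : Bool), 0 < μ (ev V a ∩ L l))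
    (hposVL : ∀ l, 0 < μ (V ∩ L l))
    (hposVhL : ∀ l, 0 < μ (Vh ∩ L l))
    (hind : ∀ (l a : Bool),
      condP μ Y (ev V a ∩ Vh ∩ L l) = condP μ Y (ev V a ∩ L l))
    (hprec : ∀ l : Bool, condP μ Vᶜ (Vh ∩ L l) ≤ p) :
    |(condP μ Y (V ∩ L true) - condP μ Y (V ∩ L false))
      - (condP μ Y (Vh ∩ L true) - condP μ Y (Vh ∩ L false))| ≤ 2 * p := by
  have key : ∀ l, |condP μ Y (V ∩ L l) - condP μ Y (Vh ∩ L l)| ≤ p := by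
    intro l
    refine le_trans ?_ (hprec l)
    have h1 := hind l true
    have hp := hpos1 l true
    simp only [ev, cond_true] at h1 hp
    rw [← h1]
    have e1 : μ.real (Vh ∩ L l) = μ.real (V ∩ Vh ∩ L l) + μ.real (Vᶜ ∩ (Vh ∩ L l)) := by
      rw [← measureReal_inter_add_sdiff (s := (Vh ∩ L l)) hV]
      congr 2 <;> (ext; simp; tauto)
    have e2 : μ.real (Y ∩ (Vh ∩ L l))
        = μ.real (Y ∩ (V ∩ Vh ∩ L l)) + μ.real (Y ∩ (Vᶜ ∩ (Vh ∩ L l))) := by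
      rw [← measureReal_inter_add_sdiff (s := (Y ∩ (Vh ∩ L l))) hV]
      congr 2 <;> (ext; simp; tauto)
    have hm : 0 < μ.real (V ∩ Vh ∩ L l) := ENNReal.toReal_pos hp.ne' (measure_ne_top _ _)
    have ham : μ.real (Y ∩ (V ∩ Vh ∩ L l)) ≤ μ.real (V ∩ Vh ∩ L l) :=
      measureReal_mono Set.inter_subset_right
    have hbn : μ.real (Y ∩ (Vᶜ ∩ (Vh ∩ L l))) ≤ μ.real (Vᶜ ∩ (Vh ∩ L l)) :=
      measureReal_mono Set.inter_subset_right
    have ha : 0 ≤ μ.real (Y ∩ (V ∩ Vh ∩ L l)) := measureReal_nonneg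
    have hb : 0 ≤ μ.real (Y ∩ (Vᶜ ∩ (Vh ∩ L l))) := measureReal_nonneg
    unfold condP
    simp only [← measureReal_def]
    rw [e1, e2]
    generalize μ.real (Y ∩ (V ∩ Vh ∩ L l)) = a at *
    generalize μ.real (Y ∩ (Vᶜ ∩ (Vh ∩ L l))) = b at *
    generalize μ.real (V ∩ Vh ∩ L l) = m at *
    generalize μ.real (Vᶜ ∩ (Vh ∩ L l)) = n at *
    have hn : 0 ≤ n := hb.trans hbn
    have hx0 : 0 ≤ a / m := div_nonneg ha hm.le
    have hx1 : a / m ≤ 1 := (div_le_one hm).2 ham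
    have hax : a = a / m * m := by field_simp
    have hmn : 0 < m + n := by linarith
    have e3 : a / m - (a + b) / (m + n) = (a / m * n - b) / (m + n) := by
      field_simp
      ring
    rw [e3, abs_div, abs_of_pos hmn]
    apply div_le_div_of_nonneg_right _ hmn.le
    rw [abs_le]
    constructor <;> nlinarith [mul_nonneg hx0 hn, mul_le_mul_of_nonneg_right hx1 hn]
  have h1 := abs_le.1 (key true)
  have h0 := abs_le.1 (key false)
  rw [abs_le]
  constructor <;> linarith [h1.1, h1.2, h0.1, h0.2]
end

section
/- Fix ℓ ∈ {0,1} and suppose that for each a ∈ {0,1}, P(Y | Vᵃ ∩ V̂ ∩ L_ℓ) = P(Y | Vᵃ ∩ L_ℓ) (i.e., y is conditionally independent of the proxy given the covariate on slice ℓ). Then |P(Y | V ∩ L_ℓ) − P(Y | V̂ ∩ L_ℓ)| ≤ P(Vᶜ | V̂ ∩ L_ℓ), i.e., the per-slice estimation error is bounded by the precision error p_ℓ of the proxy on slice ℓ. -/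
open MeasureTheory

/-- On a fixed slice `Ll`, if `Y` is conditionally independent of the proxy given the covariate,
then the per-slice estimation error is bounded by the precision error of the proxy. -/
theorem stmt_2 {Ω : Type*} [MeasurableSpace Ω] (μ : Measure Ω) [IsProbabilityMeasure μ]
    (Y V Vh Ll : Set Ω)
    (hY : MeasurableSet Y) (hV : MeasurableSet V) (hVh : MeasurableSet Vh)
    (hLl : MeasurableSet Ll)
    (hpos1 : ∀ a : Bool, 0 < μ (ev V a ∩ Vh ∩ Ll))
    (hpos2 : ∀ a : Bool, 0 < μ (ev V a ∩ Ll))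
    (hposVL : 0 < μ (V ∩ Ll))
    (hposVhL : 0 < μ (Vh ∩ Ll))
    (hind : ∀ a : Bool, condP μ Y (ev V a ∩ Vh ∩ Ll) = condP μ Y (ev V a ∩ Ll)) :
    |condP μ Y (V ∩ Ll) - condP μ Y (Vh ∩ Ll)| ≤ condP μ Vᶜ (Vh ∩ Ll) := by
  have h1 := hind true
  simp only [ev, cond_true] at h1
  have hp1 := hpos1 true
  simp only [ev, cond_true] at hp1
  rw [← h1]
  have e1 : μ.real (Vh ∩ Ll) = μ.real (V ∩ Vh ∩ Ll) + μ.real (Vᶜ ∩ (Vh ∩ Ll)) := by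
    rw [← measureReal_inter_add_sdiff (s := Vh ∩ Ll) hV]
    congr 2 <;> (ext x; simp only [Set.mem_inter_iff, Set.mem_diff, Set.mem_compl_iff]; tauto)
  have e2 : μ.real (Y ∩ (Vh ∩ Ll)) =
      μ.real (Y ∩ (V ∩ Vh ∩ Ll)) + μ.real (Y ∩ (Vᶜ ∩ (Vh ∩ Ll))) := by
    rw [← measureReal_inter_add_sdiff (s := Y ∩ (Vh ∩ Ll)) hV]
    congr 2 <;> (ext x; simp only [Set.mem_inter_iff, Set.mem_diff, Set.mem_compl_iff]; tauto)
  have hb1 : 0 < μ.real (V ∩ Vh ∩ Ll) := ENNReal.toReal_pos hp1.ne' (measure_ne_top _ _)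
  have ha1 : μ.real (Y ∩ (V ∩ Vh ∩ Ll)) ≤ μ.real (V ∩ Vh ∩ Ll) :=
    measureReal_mono Set.inter_subset_right
  have ha0 : μ.real (Y ∩ (Vᶜ ∩ (Vh ∩ Ll))) ≤ μ.real (Vᶜ ∩ (Vh ∩ Ll)) :=
    measureReal_mono Set.inter_subset_right
  have hn1 : 0 ≤ μ.real (Y ∩ (V ∩ Vh ∩ Ll)) := measureReal_nonneg
  have hn0 : 0 ≤ μ.real (Y ∩ (Vᶜ ∩ (Vh ∩ Ll))) := measureReal_nonneg
  unfold condP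
  simp only [← measureReal_def]
  rw [e1, e2]
  generalize μ.real (Y ∩ (V ∩ Vh ∩ Ll)) = a1 at *
  generalize μ.real (Y ∩ (Vᶜ ∩ (Vh ∩ Ll))) = a0 at *
  generalize μ.real (V ∩ Vh ∩ Ll) = b1 at *
  generalize μ.real (Vᶜ ∩ (Vh ∩ Ll)) = b0 at *
  have hs : 0 < b1 + b0 := by linarith
  have key : a1 / b1 - (a1 + a0) / (b1 + b0) = ((a1 / b1) * b0 - a0) / (b1 + b0) := by
    field_simp
    ring
  have hr0 : 0 ≤ a1 / b1 := div_nonneg hn1 hb1.le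
  have hr1 : a1 / b1 ≤ 1 := (div_le_one hb1).2 ha1
  rw [key, abs_div, abs_of_pos hs]
  apply div_le_div_of_nonneg_right _ hs.le
  rw [abs_le]
  constructor <;> nlinarith
end

section
/- Suppose that for each ℓ ∈ {0,1} and each b ∈ {0,1}, P(Y | V ∩ V̂ᵇ ∩ L_ℓ) = P(Y | V̂ᵇ ∩ L_ℓ) (i.e., y is conditionally independent of the covariate given the proxy and the group), and that for each ℓ ∈ {0,1} the conditional recall of the proxy is at least 1 − r, i.e., P(V̂ᶜ | V ∩ L_ℓ) ≤ r. Then |G − Ĝ| ≤ 2r. -/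
open MeasureTheory

theorem slice_bound {Ω : Type*} [MeasurableSpace Ω] (μ : Measure Ω) [IsProbabilityMeasure μ]
    (Y V Vh L : Set Ω) (r : ℝ) (hVh : MeasurableSet Vh)
    (hpos : 0 < μ (V ∩ Vh ∩ L))
    (hind : condP μ Y (V ∩ Vh ∩ L) = condP μ Y (Vh ∩ L))
    (hrec : condP μ Vhᶜ (V ∩ L) ≤ r) :
    |condP μ Y (V ∩ L) - condP μ Y (Vh ∩ L)| ≤ r := by
  refine le_trans ?_ hrec
  rw [← hind]
  have e1 : (μ (V ∩ L)).toReal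
      = (μ (V ∩ Vh ∩ L)).toReal + (μ (Vhᶜ ∩ (V ∩ L))).toReal := by
    have h := measureReal_inter_add_diff (μ := μ) (s := V ∩ L) hVh
    have h1 : V ∩ L ∩ Vh = V ∩ Vh ∩ L := by ext; simp; tauto
    have h2 : (V ∩ L) \ Vh = Vhᶜ ∩ (V ∩ L) := by ext; simp; tauto
    rw [h1, h2] at h
    exact h.symm
  have e2 : (μ (Y ∩ (V ∩ L))).toReal
      = (μ (Y ∩ (V ∩ Vh ∩ L))).toReal + (μ (Y ∩ (Vhᶜ ∩ (V ∩ L)))).toReal := by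
    have h := measureReal_inter_add_diff (μ := μ) (s := Y ∩ (V ∩ L)) hVh
    have h1 : Y ∩ (V ∩ L) ∩ Vh = Y ∩ (V ∩ Vh ∩ L) := by ext; simp; tauto
    have h2 : (Y ∩ (V ∩ L)) \ Vh = Y ∩ (Vhᶜ ∩ (V ∩ L)) := by ext; simp; tauto
    rw [h1, h2] at h
    exact h.symm
  have l1 : (μ (Y ∩ (V ∩ Vh ∩ L))).toReal ≤ (μ (V ∩ Vh ∩ L)).toReal :=
    measureReal_mono (μ := μ) Set.inter_subset_right
  have l2 : (μ (Y ∩ (Vhᶜ ∩ (V ∩ L)))).toReal ≤ (μ (Vhᶜ ∩ (V ∩ L))).toReal :=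
    measureReal_mono (μ := μ) Set.inter_subset_right
  have pa : 0 < (μ (V ∩ Vh ∩ L)).toReal :=
    ENNReal.toReal_pos hpos.ne' (measure_ne_top _ _)
  unfold condP
  rw [e1, e2]
  have n1 : 0 ≤ (μ (Y ∩ (V ∩ Vh ∩ L))).toReal := ENNReal.toReal_nonneg
  have n2 : 0 ≤ (μ (Y ∩ (Vhᶜ ∩ (V ∩ L)))).toReal := ENNReal.toReal_nonneg
  generalize (μ (Y ∩ (V ∩ Vh ∩ L))).toReal = ya at *
  generalize (μ (Y ∩ (Vhᶜ ∩ (V ∩ L)))).toReal = yb at *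
  generalize (μ (V ∩ Vh ∩ L)).toReal = a at *
  generalize (μ (Vhᶜ ∩ (V ∩ L))).toReal = b at *
  have hb : 0 ≤ b := n2.trans l2
  have hab : 0 < a + b := by linarith
  have key : (ya + yb) / (a + b) - ya / a = (yb - ya / a * b) / (a + b) := by
    field_simp
    ring
  have p0 : 0 ≤ ya / a := by positivity
  have p1 : ya / a ≤ 1 := (div_le_one pa).2 l1
  rw [key, abs_div, abs_of_pos hab]
  gcongr
  rw [abs_le]
  constructor <;> nlinarith

/-- If `Y` is conditionally independent of the covariate given the proxy and the group, and
the proxy has conditional recall at least `1 - r` on each slice, then `|G - Ĝ| ≤ 2r`. -/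
theorem stmt_3 {Ω : Type*} [MeasurableSpace Ω] (μ : Measure Ω) [IsProbabilityMeasure μ]
    (Y V Vh : Set Ω) (L : Bool → Set Ω) (r : ℝ)
    (hY : MeasurableSet Y) (hV : MeasurableSet V) (hVh : MeasurableSet Vh)
    (hL : ∀ l, MeasurableSet (L l))
    (hpos1 : ∀ (l b : Bool), 0 < μ (V ∩ ev Vh b ∩ L l))
    (hpos2 : ∀ (l b : Bool), 0 < μ (ev Vh b ∩ L l))
    (hposVL : ∀ l, 0 < μ (V ∩ L l))
    (hposVhL : ∀ l, 0 < μ (Vh ∩ L l))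
    (hind : ∀ (l b : Bool),
      condP μ Y (V ∩ ev Vh b ∩ L l) = condP μ Y (ev Vh b ∩ L l))
    (hrec : ∀ l : Bool, condP μ Vhᶜ (V ∩ L l) ≤ r) :
    |(condP μ Y (V ∩ L true) - condP μ Y (V ∩ L false))
      - (condP μ Y (Vh ∩ L true) - condP μ Y (Vh ∩ L false))| ≤ 2 * r := by
  have h : ∀ l, |condP μ Y (V ∩ L l) - condP μ Y (Vh ∩ L l)| ≤ r := fun l =>
    slice_bound μ Y V Vh (L l) r hVh (hpos1 l true) (hind l true) (hrec l)
  have h1 := abs_le.1 (h true)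
  have h0 := abs_le.1 (h false)
  rw [abs_le]
  constructor <;> linarith [h1.1, h1.2, h0.1, h0.2]
end

section
/- Fix ℓ ∈ {0,1} and suppose that for each b ∈ {0,1}, P(Y | V ∩ V̂ᵇ ∩ L_ℓ) = P(Y | V̂ᵇ ∩ L_ℓ) (i.e., y is conditionally independent of the covariate given the proxy on slice ℓ). Then |P(Y | V ∩ L_ℓ) − P(Y | V̂ ∩ L_ℓ)| ≤ P(V̂ᶜ | V ∩ L_ℓ), i.e., the per-slice estimation error is bounded by the recall error r_ℓ of the proxy on slice ℓ. -/
open MeasureTheory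

/-- On a fixed slice `Ll`, if `Y` is conditionally independent of the covariate given the proxy,
then the per-slice estimation error is bounded by the recall error of the proxy. -/
theorem stmt_4 {Ω : Type*} [MeasurableSpace Ω] (μ : Measure Ω) [IsProbabilityMeasure μ]
    (Y V Vh Ll : Set Ω)
    (hY : MeasurableSet Y) (hV : MeasurableSet V) (hVh : MeasurableSet Vh)
    (hLl : MeasurableSet Ll)
    (hpos1 : ∀ b : Bool, 0 < μ (V ∩ ev Vh b ∩ Ll))
    (hpos2 : ∀ b : Bool, 0 < μ (ev Vh b ∩ Ll))
    (hposVL : 0 < μ (V ∩ Ll))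
    (hposVhL : 0 < μ (Vh ∩ Ll))
    (hind : ∀ b : Bool, condP μ Y (V ∩ ev Vh b ∩ Ll) = condP μ Y (ev Vh b ∩ Ll)) :
    |condP μ Y (V ∩ Ll) - condP μ Y (Vh ∩ Ll)| ≤ condP μ Vhᶜ (V ∩ Ll) := by
  have h1 := hind true
  have hp1 := hpos1 true
  have hp2 := hpos2 true
  simp only [ev, cond_true] at h1 hp1 hp2
  have hm : (μ (V ∩ Ll)).toReal = (μ (V ∩ Vh ∩ Ll)).toReal + (μ (Vhᶜ ∩ (V ∩ Ll))).toReal := by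
    rw [← measure_inter_add_sdiff (V ∩ Ll) hVh,
      ENNReal.toReal_add (measure_ne_top _ _) (measure_ne_top _ _)]
    congr 3 <;> (ext x; simp only [Set.mem_inter_iff, Set.mem_sdiff, Set.mem_compl_iff]; tauto)
  have hy : (μ (Y ∩ (V ∩ Ll))).toReal = (μ (Y ∩ (V ∩ Vh ∩ Ll))).toReal
      + (μ (Y ∩ (Vhᶜ ∩ (V ∩ Ll)))).toReal := by
    rw [← measure_inter_add_sdiff (Y ∩ (V ∩ Ll)) hVh,
      ENNReal.toReal_add (measure_ne_top _ _) (measure_ne_top _ _)]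
    congr 3 <;> (ext x; simp only [Set.mem_inter_iff, Set.mem_sdiff, Set.mem_compl_iff]; tauto)
  have ha : 0 < (μ (V ∩ Vh ∩ Ll)).toReal := ENNReal.toReal_pos hp1.ne' (measure_ne_top _ _)
  have hle : (μ (Y ∩ (Vhᶜ ∩ (V ∩ Ll)))).toReal ≤ (μ (Vhᶜ ∩ (V ∩ Ll))).toReal :=
    ENNReal.toReal_mono (measure_ne_top _ _) (measure_mono Set.inter_subset_right)
  have hle1 : (μ (Y ∩ (V ∩ Vh ∩ Ll))).toReal ≤ (μ (V ∩ Vh ∩ Ll)).toReal :=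
    ENNReal.toReal_mono (measure_ne_top _ _) (measure_mono Set.inter_subset_right)
  have h0 : 0 ≤ (μ (Y ∩ (Vhᶜ ∩ (V ∩ Ll)))).toReal := ENNReal.toReal_nonneg
  have h01 : 0 ≤ (μ (Y ∩ (V ∩ Vh ∩ Ll))).toReal := ENNReal.toReal_nonneg
  rw [← h1]
  unfold condP
  rw [hm, hy]
  generalize (μ (Y ∩ (Vhᶜ ∩ (V ∩ Ll)))).toReal = yb at *
  generalize (μ (Vhᶜ ∩ (V ∩ Ll))).toReal = b at *
  generalize (μ (Y ∩ (V ∩ Vh ∩ Ll))).toReal = ya at *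
  generalize (μ (V ∩ Vh ∩ Ll)).toReal = a at *
  have hp0 : 0 ≤ ya / a := by positivity
  have hp1' : ya / a ≤ 1 := (div_le_one ha).2 hle1
  have hb : 0 ≤ b := h0.trans hle
  have hab : 0 < a + b := by linarith
  have key : (ya + yb) / (a + b) - ya / a = (yb - ya / a * b) / (a + b) := by
    field_simp
    ring
  rw [key, abs_div, abs_of_pos hab]
  gcongr
  rw [abs_le]
  constructor <;> nlinarith [mul_nonneg hp0 hb, mul_nonneg (sub_nonneg.2 hp1') hb]
end

section
/- Fix ℓ ∈ {0,1} and define δ_ℓ = P(Y | V ∩ L_ℓ) − P(Y | V̂ ∩ L_ℓ). Then δ_ℓ = (p_ℓ − r_ℓ) · P(Y | V ∩ V̂ ∩ L_ℓ) + r_ℓ · P(Y | V ∩ V̂ᶜ ∩ L_ℓ) − p_ℓ · P(Y | Vᶜ ∩ V̂ ∩ L_ℓ). -/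
open MeasureTheory

/-- Total probability over the split of `B` by `C`. -/
theorem condP_split {Ω : Type*} [MeasurableSpace Ω] (μ : Measure Ω) [IsProbabilityMeasure μ]
    (A B C : Set Ω) (hC : MeasurableSet C)
    (hB : 0 < μ B) (h1 : 0 < μ (B ∩ C)) (h0 : 0 < μ (B \ C)) :
    condP μ A B = (1 - condP μ Cᶜ B) * condP μ A (B ∩ C)
      + condP μ Cᶜ B * condP μ A (B \ C) := by
  have e1 := measureReal_inter_add_sdiff (μ := μ) (s := B) hC
  have e2 := measureReal_inter_add_sdiff (μ := μ) (s := A ∩ B) hC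
  have s1 : Cᶜ ∩ B = B \ C := by ext; simp; tauto
  have s2 : A ∩ (B ∩ C) = (A ∩ B) ∩ C := by ext; simp; tauto
  have s3 : A ∩ (B \ C) = (A ∩ B) \ C := by ext; simp; tauto
  have pB : (μ B).toReal ≠ 0 := (ENNReal.toReal_pos hB.ne' (measure_ne_top _ _)).ne'
  have p1 : (μ (B ∩ C)).toReal ≠ 0 := (ENNReal.toReal_pos h1.ne' (measure_ne_top _ _)).ne'
  have p0 : (μ (B \ C)).toReal ≠ 0 := (ENNReal.toReal_pos h0.ne' (measure_ne_top _ _)).ne'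
  simp only [Measure.real] at e1 e2
  unfold condP
  rw [s1, s2, s3, ← e2]
  have e3 : 1 - (μ (B \ C)).toReal / (μ B).toReal = (μ (B ∩ C)).toReal / (μ B).toReal := by
    field_simp
    linarith
  rw [e3]
  field_simp

/-- The per-slice estimation error `δ_ℓ = P(Y | V ∩ Lℓ) - P(Y | V̂ ∩ Lℓ)` decomposes as
`(p_ℓ - r_ℓ)·P(Y | V ∩ V̂ ∩ Lℓ) + r_ℓ·P(Y | V ∩ V̂ᶜ ∩ Lℓ) - p_ℓ·P(Y | Vᶜ ∩ V̂ ∩ Lℓ)`. -/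
theorem stmt_6 {Ω : Type*} [MeasurableSpace Ω] (μ : Measure Ω) [IsProbabilityMeasure μ]
    (Y V Vh Ll : Set Ω)
    (hY : MeasurableSet Y) (hV : MeasurableSet V) (hVh : MeasurableSet Vh)
    (hLl : MeasurableSet Ll)
    (hposVL : 0 < μ (V ∩ Ll))
    (hposVhL : 0 < μ (Vh ∩ Ll))
    (hpos11 : 0 < μ (V ∩ Vh ∩ Ll))
    (hpos10 : 0 < μ (V ∩ Vhᶜ ∩ Ll))
    (hpos01 : 0 < μ (Vᶜ ∩ Vh ∩ Ll)) :
    condP μ Y (V ∩ Ll) - condP μ Y (Vh ∩ Ll)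
      = (condP μ Vᶜ (Vh ∩ Ll) - condP μ Vhᶜ (V ∩ Ll)) * condP μ Y (V ∩ Vh ∩ Ll)
        + condP μ Vhᶜ (V ∩ Ll) * condP μ Y (V ∩ Vhᶜ ∩ Ll)
        - condP μ Vᶜ (Vh ∩ Ll) * condP μ Y (Vᶜ ∩ Vh ∩ Ll) := by
  have s1 : V ∩ Vh ∩ Ll = (V ∩ Ll) ∩ Vh := by ext; simp; tauto
  have s1' : (Vh ∩ Ll) ∩ V = (V ∩ Ll) ∩ Vh := by ext; simp; tauto
  have s2 : V ∩ Vhᶜ ∩ Ll = (V ∩ Ll) \ Vh := by ext; simp; tauto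
  have s3 : Vᶜ ∩ Vh ∩ Ll = (Vh ∩ Ll) \ V := by ext; simp; tauto
  rw [s1] at hpos11 ⊢
  rw [s2] at hpos10 ⊢
  rw [s3] at hpos01 ⊢
  have a := condP_split μ Y (V ∩ Ll) Vh hVh hposVL hpos11 hpos10
  have b := condP_split μ Y (Vh ∩ Ll) V hV hposVhL (s1' ▸ hpos11) hpos01
  rw [s1'] at b
  rw [a, b]
  ring
end

section
/- Let γ_A ∈ [0,1]. If for each ℓ ∈ {0,1} the conditional precision and the conditional recall of the proxy are both at least 1 − γ_A, i.e., p_ℓ ≤ γ_A and r_ℓ ≤ γ_A, then |G − Ĝ| ≤ 2 · γ_A. -/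
open MeasureTheory

theorem aux_real (a b c x y z g : ℝ) (hb : 0 ≤ b)
    (hx : 0 ≤ x) (hxa : x ≤ a) (hyb : y ≤ b) (hz : 0 ≤ z)
    (h1 : 0 < a + b) (h2 : 0 < a + c) (hr : b / (a + b) ≤ g) (hp : c / (a + c) ≤ g) :
    (x + y) / (a + b) - (x + z) / (a + c) ≤ g := by
  have e1 : (x + y) / (a + b) ≤ x / (a + b) + b / (a + b) := by
    rw [← add_div]; gcongr
  have e2 : x / (a + c) ≤ (x + z) / (a + c) := by
    gcongr; linarith
  rcases le_total c b with h | h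
  · have e3 : x / (a + b) ≤ x / (a + c) := by gcongr
    linarith
  · have e3 : 1 / (a + c) ≤ 1 / (a + b) := by gcongr
    have e4 : x * (1 / (a + b) - 1 / (a + c)) ≤ a * (1 / (a + b) - 1 / (a + c)) :=
      mul_le_mul_of_nonneg_right hxa (by linarith)
    have e5 : a * (1 / (a + b) - 1 / (a + c)) + b / (a + b) = c / (a + c) := by
      field_simp; ring
    have e6 : x * (1 / (a + b) - 1 / (a + c)) = x / (a + b) - x / (a + c) := by ring
    linarith

theorem aux_slice {Ω : Type*} [MeasurableSpace Ω] (μ : Measure Ω) [IsProbabilityMeasure μ]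
    (Y V W L : Set Ω) (g : ℝ) (hV : MeasurableSet V) (hW : MeasurableSet W)
    (h1 : 0 < μ (V ∩ L)) (h2 : 0 < μ (W ∩ L))
    (hp : condP μ Vᶜ (W ∩ L) ≤ g) (hr : condP μ Wᶜ (V ∩ L) ≤ g) :
    condP μ Y (V ∩ L) - condP μ Y (W ∩ L) ≤ g := by
  have k1 : 0 < μ.real (V ∩ L) := ENNReal.toReal_pos h1.ne' (measure_ne_top _ _)
  have k2 : 0 < μ.real (W ∩ L) := ENNReal.toReal_pos h2.ne' (measure_ne_top _ _)
  have d1 : μ.real (V ∩ L) = μ.real (V ∩ W ∩ L) + μ.real (Wᶜ ∩ (V ∩ L)) := by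
    rw [← measureReal_inter_add_diff (s := V ∩ L) hW]
    congr 2 <;> (ext; simp; tauto)
  have d2 : μ.real (W ∩ L) = μ.real (V ∩ W ∩ L) + μ.real (Vᶜ ∩ (W ∩ L)) := by
    rw [← measureReal_inter_add_diff (s := W ∩ L) hV]
    congr 2 <;> (ext; simp; tauto)
  have d3 : μ.real (Y ∩ (V ∩ L)) = μ.real (Y ∩ (V ∩ W ∩ L)) + μ.real (Y ∩ (Wᶜ ∩ (V ∩ L))) := by
    rw [← measureReal_inter_add_diff (s := Y ∩ (V ∩ L)) hW]
    congr 2 <;> (ext; simp; tauto)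
  have d4 : μ.real (Y ∩ (W ∩ L)) = μ.real (Y ∩ (V ∩ W ∩ L)) + μ.real (Y ∩ (Vᶜ ∩ (W ∩ L))) := by
    rw [← measureReal_inter_add_diff (s := Y ∩ (W ∩ L)) hV]
    congr 2 <;> (ext; simp; tauto)
  change μ.real (Vᶜ ∩ (W ∩ L)) / μ.real (W ∩ L) ≤ g at hp
  change μ.real (Wᶜ ∩ (V ∩ L)) / μ.real (V ∩ L) ≤ g at hr
  change μ.real (Y ∩ (V ∩ L)) / μ.real (V ∩ L) - μ.real (Y ∩ (W ∩ L)) / μ.real (W ∩ L) ≤ g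
  rw [d3, d4]
  rw [d1] at hr k1 ⊢
  rw [d2] at hp k2 ⊢
  exact aux_real _ _ _ _ _ _ _ measureReal_nonneg measureReal_nonneg
    (measureReal_mono Set.inter_subset_right) (measureReal_mono Set.inter_subset_right)
    measureReal_nonneg k1 k2 hr hp

/-- If the proxy has precision and recall at least `1 - γ_A` on each slice
(`p_ℓ ≤ γ_A` and `r_ℓ ≤ γ_A`), then `|G - Ĝ| ≤ 2 γ_A`. -/
theorem stmt_8 {Ω : Type*} [MeasurableSpace Ω] (μ : Measure Ω) [IsProbabilityMeasure μ]
    (Y V Vh : Set Ω) (L : Bool → Set Ω) (γA : ℝ)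
    (hY : MeasurableSet Y) (hV : MeasurableSet V) (hVh : MeasurableSet Vh)
    (hL : ∀ l, MeasurableSet (L l))
    (hγA : γA ∈ Set.Icc (0 : ℝ) 1)
    (hposVL : ∀ l, 0 < μ (V ∩ L l))
    (hposVhL : ∀ l, 0 < μ (Vh ∩ L l))
    (hprec : ∀ l : Bool, condP μ Vᶜ (Vh ∩ L l) ≤ γA)
    (hrec : ∀ l : Bool, condP μ Vhᶜ (V ∩ L l) ≤ γA) :
    |(condP μ Y (V ∩ L true) - condP μ Y (V ∩ L false))
      - (condP μ Y (Vh ∩ L true) - condP μ Y (Vh ∩ L false))| ≤ 2 * γA := by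
  have A := fun l => aux_slice μ Y V Vh (L l) γA hV hVh (hposVL l) (hposVhL l) (hprec l) (hrec l)
  have B := fun l => aux_slice μ Y Vh V (L l) γA hVh hV (hposVhL l) (hposVL l) (hrec l) (hprec l)
  have A1 := A true
  have A0 := A false
  have B1 := B true
  have B0 := B false
  rw [abs_le]
  constructor <;> linarith
end

section
/- Fix ℓ ∈ {0,1}, let ε ∈ [0,1], and define δ_ℓ = P(Y | V ∩ L_ℓ) − P(Y | V̂ ∩ L_ℓ). If the diagonals of the confusion matrix are ε-close on slice ℓ, i.e., |P(Y | V ∩ V̂ᶜ ∩ L_ℓ) − P(Y | Vᶜ ∩ V̂ ∩ L_ℓ)| ≤ ε, then |δ_ℓ| ≤ |p_ℓ − r_ℓ| + ε. -/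
open MeasureTheory

lemma real_aux (a b c x y z ε : ℝ) (ha : 0 ≤ a) (hb : 0 < b) (hc : 0 < c)
    (hx0 : 0 ≤ x) (hxa : x ≤ a) (hz0 : 0 ≤ z) (hzc : z ≤ c)
    (h : |y / b - z / c| ≤ ε) :
    |(x + y) / (a + b) - (x + z) / (a + c)| ≤ |c / (a + c) - b / (a + b)| + ε := by
  obtain ⟨q, hq0, hq1, hq⟩ : ∃ q : ℝ, 0 ≤ q ∧ q ≤ 1 ∧ x = a * q := by
    rcases ha.eq_or_lt with h0 | h0
    · exact ⟨0, le_rfl, zero_le_one, by rw [mul_zero]; linarith⟩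
    · exact ⟨x / a, by positivity, (div_le_one h0).2 hxa, by field_simp⟩
  have hab : 0 < a + b := by linarith
  have hac : 0 < a + c := by linarith
  have key : (x + y) / (a + b) - (x + z) / (a + c)
      = (c / (a + c) - b / (a + b)) * (q - z / c) + b / (a + b) * (y / b - z / c) := by
    rw [hq]; field_simp; ring
  have ht0 : 0 ≤ z / c := by positivity
  have ht1 : z / c ≤ 1 := (div_le_one hc).2 hzc
  have hr0 : 0 ≤ b / (a + b) := by positivity
  have hr1 : b / (a + b) ≤ 1 := (div_le_one hab).2 (by linarith)
  rw [key]
  refine (abs_add_le _ _).trans (add_le_add ?_ ?_)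
  · rw [abs_mul]
    exact mul_le_of_le_one_right (abs_nonneg _) (abs_le.2 ⟨by linarith, by linarith⟩)
  · rw [abs_mul, abs_of_nonneg hr0]
    exact (mul_le_of_le_one_left (abs_nonneg _) hr1).trans h

/-- On a fixed slice `Ll`, if the diagonals of the confusion matrix are `ε`-close, then the
per-slice estimation error `δ_ℓ` satisfies `|δ_ℓ| ≤ |p_ℓ - r_ℓ| + ε`. -/
theorem stmt_9 {Ω : Type*} [MeasurableSpace Ω] (μ : Measure Ω) [IsProbabilityMeasure μ]
    (Y V Vh Ll : Set Ω) (ε : ℝ)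
    (hY : MeasurableSet Y) (hV : MeasurableSet V) (hVh : MeasurableSet Vh)
    (hLl : MeasurableSet Ll)
    (hε : ε ∈ Set.Icc (0 : ℝ) 1)
    (hposVL : 0 < μ (V ∩ Ll))
    (hposVhL : 0 < μ (Vh ∩ Ll))
    (hpos10 : 0 < μ (V ∩ Vhᶜ ∩ Ll))
    (hpos01 : 0 < μ (Vᶜ ∩ Vh ∩ Ll))
    (hdiag : |condP μ Y (V ∩ Vhᶜ ∩ Ll) - condP μ Y (Vᶜ ∩ Vh ∩ Ll)| ≤ ε) :
    |condP μ Y (V ∩ Ll) - condP μ Y (Vh ∩ Ll)|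
      ≤ |condP μ Vᶜ (Vh ∩ Ll) - condP μ Vhᶜ (V ∩ Ll)| + ε := by
  have split : ∀ A B : Set Ω, MeasurableSet B →
      (μ A).toReal = (μ (A ∩ B)).toReal + (μ (A ∩ Bᶜ)).toReal := by
    intro A B hB
    rw [← ENNReal.toReal_add (measure_ne_top _ _) (measure_ne_top _ _), ← Set.diff_eq,
      measure_inter_add_diff A hB]
  have mono : ∀ A B : Set Ω, A ⊆ B → (μ A).toReal ≤ (μ B).toReal := fun A B hAB =>
    ENNReal.toReal_mono (measure_ne_top _ _) (measure_mono hAB)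
  have e1 := split (V ∩ Ll) Vh hVh
  have e2 := split (Vh ∩ Ll) V hV
  have e3 := split (Y ∩ (V ∩ Ll)) Vh hVh
  have e4 := split (Y ∩ (Vh ∩ Ll)) V hV
  rw [show V ∩ Ll ∩ Vh = V ∩ Vh ∩ Ll by ext; simp; tauto,
    show V ∩ Ll ∩ Vhᶜ = V ∩ Vhᶜ ∩ Ll by ext; simp; tauto] at e1
  rw [show Vh ∩ Ll ∩ V = V ∩ Vh ∩ Ll by ext; simp; tauto,
    show Vh ∩ Ll ∩ Vᶜ = Vᶜ ∩ Vh ∩ Ll by ext; simp; tauto] at e2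
  rw [show Y ∩ (V ∩ Ll) ∩ Vh = Y ∩ (V ∩ Vh ∩ Ll) by ext; simp; tauto,
    show Y ∩ (V ∩ Ll) ∩ Vhᶜ = Y ∩ (V ∩ Vhᶜ ∩ Ll) by ext; simp; tauto] at e3
  rw [show Y ∩ (Vh ∩ Ll) ∩ V = Y ∩ (V ∩ Vh ∩ Ll) by ext; simp; tauto,
    show Y ∩ (Vh ∩ Ll) ∩ Vᶜ = Y ∩ (Vᶜ ∩ Vh ∩ Ll) by ext; simp; tauto] at e4
  unfold condP at *
  rw [show Vᶜ ∩ (Vh ∩ Ll) = Vᶜ ∩ Vh ∩ Ll by ext; simp; tauto,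
    show Vhᶜ ∩ (V ∩ Ll) = V ∩ Vhᶜ ∩ Ll by ext; simp; tauto, e1, e2, e3, e4]
  exact real_aux _ _ _ _ _ _ ε ENNReal.toReal_nonneg
    (ENNReal.toReal_pos hpos10.ne' (measure_ne_top _ _))
    (ENNReal.toReal_pos hpos01.ne' (measure_ne_top _ _))
    ENNReal.toReal_nonneg (mono _ _ Set.inter_subset_right)
    ENNReal.toReal_nonneg (mono _ _ Set.inter_subset_right) hdiag
end

section
/- Let γ_B1, ε_B1 ∈ [0,1]. Suppose the closeness-of-diagonals condition holds with ε_B1, i.e., for each ℓ ∈ {0,1}: |P(Y | V ∩ V̂ᶜ ∩ L_ℓ) − P(Y | Vᶜ ∩ V̂ ∩ L_ℓ)| ≤ ε_B1, and suppose |r₀ − p₀| ≤ γ_B1 and |r₁ − p₁| ≤ γ_B1. Then |G − Ĝ| ≤ 2(γ_B1 + ε_B1). -/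
open MeasureTheory

theorem condP_nonneg_aux {Ω : Type*} [MeasurableSpace Ω] (μ : Measure Ω) (A B : Set Ω) :
    0 ≤ condP μ A B := by
  unfold condP; positivity

theorem condP_le_one_aux {Ω : Type*} [MeasurableSpace Ω] (μ : Measure Ω) [IsProbabilityMeasure μ]
    (A B : Set Ω) : condP μ A B ≤ 1 := by
  unfold condP
  exact div_le_one_of_le₀ (ENNReal.toReal_mono (measure_ne_top μ _)
    (measure_mono Set.inter_subset_right)) ENNReal.toReal_nonneg

theorem condP_mul_aux {Ω : Type*} [MeasurableSpace Ω] (μ : Measure Ω) [IsProbabilityMeasure μ]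
    (A B : Set Ω) : condP μ A B * (μ B).toReal = (μ (A ∩ B)).toReal := by
  unfold condP
  by_cases h : (μ B).toReal = 0
  · have : (μ (A ∩ B)).toReal ≤ (μ B).toReal := ENNReal.toReal_mono (measure_ne_top μ _)
      (measure_mono Set.inter_subset_right)
    have h2 : 0 ≤ (μ (A ∩ B)).toReal := ENNReal.toReal_nonneg
    rw [h, mul_zero]; linarith
  · exact div_mul_cancel₀ _ h

theorem split_aux {Ω : Type*} [MeasurableSpace Ω] (μ : Measure Ω) [IsProbabilityMeasure μ]
    (B C : Set Ω) (hC : MeasurableSet C) :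
    (μ B).toReal = (μ (B ∩ C)).toReal + (μ (B ∩ Cᶜ)).toReal := by
  rw [← ENNReal.toReal_add (measure_ne_top μ _) (measure_ne_top μ _), ← Set.diff_eq,
    measure_inter_add_diff B hC]

theorem condP_split_aux {Ω : Type*} [MeasurableSpace Ω] (μ : Measure Ω) [IsProbabilityMeasure μ]
    (A B C : Set Ω) (hC : MeasurableSet C) (hB : 0 < μ B) :
    condP μ A B = (1 - condP μ Cᶜ B) * condP μ A (B ∩ C)
      + condP μ Cᶜ B * condP μ A (B ∩ Cᶜ) := by
  have hb : 0 < (μ B).toReal := ENNReal.toReal_pos hB.ne' (measure_ne_top μ _)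
  apply mul_right_cancel₀ hb.ne'
  have h1 := condP_mul_aux μ A B
  have h2 := condP_mul_aux μ Cᶜ B
  have h3 := condP_mul_aux μ A (B ∩ C)
  have h4 := condP_mul_aux μ A (B ∩ Cᶜ)
  have h5 := split_aux μ B C hC
  have h6 := split_aux μ (A ∩ B) C hC
  rw [Set.inter_comm Cᶜ B] at h2
  rw [← Set.inter_assoc] at h3 h4
  have e : ((1 - condP μ Cᶜ B) * condP μ A (B ∩ C)
      + condP μ Cᶜ B * condP μ A (B ∩ Cᶜ)) * (μ B).toReal
      = condP μ A (B ∩ C) * ((μ B).toReal - condP μ Cᶜ B * (μ B).toReal)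
        + condP μ A (B ∩ Cᶜ) * (condP μ Cᶜ B * (μ B).toReal) := by ring
  rw [e, h2, h4, h1, h6, ← h3, h5]
  ring

theorem slice_aux {Ω : Type*} [MeasurableSpace Ω] (μ : Measure Ω) [IsProbabilityMeasure μ]
    (Y V Vh L : Set Ω) (γ ε : ℝ) (hV : MeasurableSet V) (hVh : MeasurableSet Vh)
    (h1 : 0 < μ (V ∩ L)) (h2 : 0 < μ (Vh ∩ L))
    (hd : |condP μ Y (V ∩ Vhᶜ ∩ L) - condP μ Y (Vᶜ ∩ Vh ∩ L)| ≤ ε)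
    (hp : |condP μ Vhᶜ (V ∩ L) - condP μ Vᶜ (Vh ∩ L)| ≤ γ) :
    |condP μ Y (V ∩ L) - condP μ Y (Vh ∩ L)| ≤ γ + ε := by
  have s1 := condP_split_aux μ Y (V ∩ L) Vh hVh h1
  have s2 := condP_split_aux μ Y (Vh ∩ L) V hV h2
  rw [show Vh ∩ L ∩ V = V ∩ L ∩ Vh by ext; simp; tauto,
    show Vh ∩ L ∩ Vᶜ = Vᶜ ∩ Vh ∩ L by ext; simp; tauto] at s2
  rw [show V ∩ L ∩ Vhᶜ = V ∩ Vhᶜ ∩ L by ext; simp; tauto] at s1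
  have a0 := condP_nonneg_aux μ Y (V ∩ L ∩ Vh)
  have a1 := condP_le_one_aux μ Y (V ∩ L ∩ Vh)
  have c0 := condP_nonneg_aux μ Y (Vᶜ ∩ Vh ∩ L)
  have c1 := condP_le_one_aux μ Y (Vᶜ ∩ Vh ∩ L)
  have r0 := condP_nonneg_aux μ Vhᶜ (V ∩ L)
  have r1 := condP_le_one_aux μ Vhᶜ (V ∩ L)
  rw [s1, s2]
  generalize condP μ Y (V ∩ L ∩ Vh) = a at *
  generalize condP μ Y (Vᶜ ∩ Vh ∩ L) = c at *
  generalize condP μ Y (V ∩ Vhᶜ ∩ L) = b at *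
  generalize condP μ Vhᶜ (V ∩ L) = r at *
  generalize condP μ Vᶜ (Vh ∩ L) = p at *
  have e : (1 - r) * a + r * b - ((1 - p) * a + p * c) = (r - p) * (c - a) + r * (b - c) := by
    ring
  rw [e]
  refine (abs_add_le _ _).trans (add_le_add ?_ ?_)
  · rw [abs_mul]
    have : |c - a| ≤ 1 := abs_le.2 ⟨by linarith, by linarith⟩
    exact (mul_le_of_le_one_right (abs_nonneg _) this).trans hp
  · rw [abs_mul, abs_of_nonneg r0]
    exact (mul_le_of_le_one_left (abs_nonneg _) r1).trans hd

/-- Case B1: if the diagonals of the confusion matrix are `ε_B1`-close on each slice, and the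
precision and recall errors are `γ_B1`-close within each slice, then
`|G - Ĝ| ≤ 2 (γ_B1 + ε_B1)`. -/
theorem stmt_10 {Ω : Type*} [MeasurableSpace Ω] (μ : Measure Ω) [IsProbabilityMeasure μ]
    (Y V Vh : Set Ω) (L : Bool → Set Ω) (γB1 εB1 : ℝ)
    (hY : MeasurableSet Y) (hV : MeasurableSet V) (hVh : MeasurableSet Vh)
    (hL : ∀ l, MeasurableSet (L l))
    (hγB1 : γB1 ∈ Set.Icc (0 : ℝ) 1) (hεB1 : εB1 ∈ Set.Icc (0 : ℝ) 1)
    (hposVL : ∀ l, 0 < μ (V ∩ L l))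
    (hposVhL : ∀ l, 0 < μ (Vh ∩ L l))
    (hpos10 : ∀ l, 0 < μ (V ∩ Vhᶜ ∩ L l))
    (hpos01 : ∀ l, 0 < μ (Vᶜ ∩ Vh ∩ L l))
    (hdiag : ∀ l : Bool,
      |condP μ Y (V ∩ Vhᶜ ∩ L l) - condP μ Y (Vᶜ ∩ Vh ∩ L l)| ≤ εB1)
    (hpr : ∀ l : Bool,
      |condP μ Vhᶜ (V ∩ L l) - condP μ Vᶜ (Vh ∩ L l)| ≤ γB1) :
    |(condP μ Y (V ∩ L true) - condP μ Y (V ∩ L false))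
      - (condP μ Y (Vh ∩ L true) - condP μ Y (Vh ∩ L false))|
      ≤ 2 * (γB1 + εB1) := by
  have k (l : Bool) := abs_le.1 (slice_aux μ Y V Vh (L l) γB1 εB1 hV hVh (hposVL l) (hposVhL l)
    (hdiag l) (hpr l))
  obtain ⟨t1, t2⟩ := k true
  obtain ⟨f1, f2⟩ := k false
  exact abs_le.2 ⟨by linarith, by linarith⟩
end
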